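/- Let n ≥ 1, let P be an n×n nonnegative row sub-stochastic matrix, and let w ∈ ℝ^n with w ≥ 0. For c ∈ ℝ^n let x̲(c) and x̄(c) denote the minimal and maximal equilibrium of (P, w) with exogenous flow c. Then for every c* ∈ ℝ^n: (i) x̲(c* − t·𝟙) → x̲(c*) as t → 0+ (where 𝟙 is the all-ones vector); and (ii) x̄(c* + t·𝟙) → x̄(c*) as t → 0+. -/

import Mathlib

open Matrix Finset Filter Topology

/-- The saturation function `S_0^w`. -/
def sat {n : ℕ} (w y : Fin n → ℝ) : Fin n → ℝ := fun i => min (max (y i) 0) (w i)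

/-- `x` is an equilibrium of the network `(P, w)` with exogenous flow `c`. -/
def IsEquil {n : ℕ} (P : Matrix (Fin n) (Fin n) ℝ) (w c x : Fin n → ℝ) : Prop :=
  x = sat w (Pᵀ.mulVec x + c)

/-!
A minimal equilibrium is a least fixed point of a monotone map, hence by Knaster–Tarski also a least
pre-fixed point, so it increases with the flow. As `c → c*` from below, the minimal equilibria stay
in a compact box, and by continuity each of their cluster points is an equilibrium for `c*`. Such a
point lies below `x̲(c*)` by monotonicity and above it by minimality, so `x̲(c*)` is the only
cluster point and hence the limit. Maximal equilibria follow by order duality.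
-/

open Function Set

section ExtremalFixedPoints

variable {α β : Type*} [ConditionallyCompleteLattice β]

theorem isFixedPt_sInf_of_monotone {F : β → β} (hF : Monotone F)
    (hne : {x | F x ≤ x}.Nonempty) (hbdd : BddBelow {x | F x ≤ x}) :
    IsFixedPt F (sInf {x | F x ≤ x}) := by
  have hle : F (sInf {x | F x ≤ x}) ≤ sInf {x | F x ≤ x} :=
    le_csInf hne fun x hx => (hF (csInf_le hbdd hx)).trans hx
  exact hle.antisymm (csInf_le hbdd (hF hle))

theorem le_of_isLeast_fixedPoints {F : β → β} (hF : Monotone F)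
    (hbdd : BddBelow {x | F x ≤ x}) {m x : β} (hm : IsLeast (fixedPoints F) m) (hx : F x ≤ x) :
    m ≤ x :=
  (hm.2 (isFixedPt_sInf_of_monotone hF ⟨x, hx⟩ hbdd)).trans (csInf_le hbdd hx)

theorem monotone_of_isLeast_fixedPoints [Preorder α] {Φ : α → β → β} (hparam : Monotone Φ)
    (hΦ : ∀ c, Monotone (Φ c)) (hbdd : ∀ c, BddBelow {x | Φ c x ≤ x}) {m : α → β}
    (hm : ∀ c, IsLeast (fixedPoints (Φ c)) (m c)) : Monotone m := fun c d hcd =>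
  le_of_isLeast_fixedPoints (hΦ c) (hbdd c) (hm c) ((hparam hcd (m d)).trans (hm d).1.le)

variable [Preorder α] [TopologicalSpace α] [TopologicalSpace β] [OrderClosedTopology β]
  [CompactIccSpace β] {Φ : α → β → β} {m : α → β} {a b : β}

theorem continuousWithinAt_Iic_of_isLeast_fixedPoints (hcont : Continuous (uncurry Φ))
    (hparam : Monotone Φ) (hΦ : ∀ c, Monotone (Φ c)) (hmem : ∀ c x, Φ c x ∈ Icc a b)
    (hm : ∀ c, IsLeast (fixedPoints (Φ c)) (m c)) (c : α) : ContinuousWithinAt m (Iic c) c := by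
  have hmono : Monotone m := monotone_of_isLeast_fixedPoints hparam hΦ
    (fun d => ⟨a, fun x hx => (hmem d x).1.trans hx⟩) hm
  have hbox : ∀ d, m d ∈ Icc a b := fun d => (hm d).1 ▸ hmem d (m d)
  refine isCompact_Icc.tendsto_nhds_of_unique_mapClusterPt (.of_forall hbox) fun x _ hx => ?_
  obtain ⟨U, hU, hmU⟩ := mapClusterPt_iff_ultrafilter.1 hx
  have hfix : IsFixedPt (Φ c) x := by
    have hpair : Tendsto (fun d => (d, m d)) U (𝓝 (c, x)) :=
      (tendsto_id'.2 (hU.trans nhdsWithin_le_nhds)).prodMk_nhds hmU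
    exact tendsto_nhds_unique
      (((hcont.tendsto (c, x)).comp hpair).congr fun d => (hm d).1) hmU
  have hle : x ≤ m c :=
    le_of_tendsto hmU (hU (mem_of_superset self_mem_nhdsWithin fun _ h => hmono h))
  exact hle.antisymm ((hm c).2 hfix)

theorem continuousWithinAt_Ici_of_isGreatest_fixedPoints (hcont : Continuous (uncurry Φ))
    (hparam : Monotone Φ) (hΦ : ∀ c, Monotone (Φ c)) (hmem : ∀ c x, Φ c x ∈ Icc a b)
    (hm : ∀ c, IsGreatest (fixedPoints (Φ c)) (m c)) (c : α) : ContinuousWithinAt m (Ici c) c :=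
  have hparam_dual : Monotone (α := αᵒᵈ) (β := βᵒᵈ → βᵒᵈ) Φ := fun _ _ h => hparam h
  continuousWithinAt_Iic_of_isLeast_fixedPoints (α := αᵒᵈ) (β := βᵒᵈ)
    hcont hparam_dual (fun c => (hΦ c).dual) (fun c x => (hmem c x).symm) (fun c => (hm c).dual) c

end ExtremalFixedPoints

section Ray

variable {ι G : Type*} [AddCommGroup G] [PartialOrder G] [IsOrderedAddMonoid G]
  [TopologicalSpace G] [IsTopologicalAddGroup G]

theorem tendsto_sub_const_nhdsLE (c : ι → G) :
    Tendsto (fun (t : G) i => c i - t) (𝓝[>] 0) (𝓝[≤] c) := by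
  have hcont : Continuous fun (t : G) i => c i - t := by fun_prop
  refine tendsto_nhdsWithin_iff.2
    ⟨(hcont.tendsto' 0 c (by simp)).mono_left nhdsWithin_le_nhds, ?_⟩
  filter_upwards [self_mem_nhdsWithin] with t ht i
  exact sub_le_self _ (le_of_lt ht)

theorem tendsto_add_const_nhdsGE (c : ι → G) :
    Tendsto (fun (t : G) i => c i + t) (𝓝[>] 0) (𝓝[≥] c) := by
  have hcont : Continuous fun (t : G) i => c i + t := by fun_prop
  refine tendsto_nhdsWithin_iff.2
    ⟨(hcont.tendsto' 0 c (by simp)).mono_left nhdsWithin_le_nhds, ?_⟩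
  filter_upwards [self_mem_nhdsWithin] with t ht i
  exact le_add_of_nonneg_right (le_of_lt ht)

end Ray

theorem monotone_mulVec_of_nonneg {m n R : Type*} [Fintype n] [Semiring R] [PartialOrder R]
    [IsOrderedRing R] {A : Matrix m n R} (hA : ∀ i j, 0 ≤ A i j) : Monotone A.mulVec :=
  fun _ _ h i => dotProduct_le_dotProduct_of_nonneg_left h (hA i)

section Network

variable {n : ℕ} {P : Matrix (Fin n) (Fin n) ℝ}

theorem monotone_sat (w : Fin n → ℝ) : Monotone (sat w) := fun _ _ h i =>
  min_le_min_right _ (max_le_max_right _ (h i))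

theorem continuous_sat (w : Fin n → ℝ) : Continuous (sat w) := by
  unfold sat
  fun_prop

theorem sat_mem_Icc (w y : Fin n → ℝ) : sat w y ∈ Icc (0 ⊓ w) w :=
  ⟨fun _ => min_le_min_right _ (le_max_right _ _), fun _ => min_le_right _ _⟩

/-- The map `x ↦ S_0^w(Pᵀx + c)`, whose fixed points are the equilibria of the network `(P, w)` with
exogenous flow `c`. The flow comes before the state, so that `equilMap P w` is a family of self-maps
indexed by `c`. -/
def equilMap (P : Matrix (Fin n) (Fin n) ℝ) (w c x : Fin n → ℝ) : Fin n → ℝ :=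
  sat w (Pᵀ.mulVec x + c)

theorem fixedPoints_equilMap (P : Matrix (Fin n) (Fin n) ℝ) (w c : Fin n → ℝ) :
    fixedPoints (equilMap P w c) = {x | IsEquil P w c x} :=
  Set.ext fun _ => eq_comm

theorem monotone_equilMap (P : Matrix (Fin n) (Fin n) ℝ) (w : Fin n → ℝ) :
    Monotone (equilMap P w) := fun _ _ h _ =>
  monotone_sat w (add_le_add_right h _)

theorem monotone_equilMap_apply (hP : ∀ i j, 0 ≤ P i j) (w c : Fin n → ℝ) :
    Monotone (equilMap P w c) := fun _ _ h =>
  monotone_sat w (add_le_add_left (monotone_mulVec_of_nonneg (fun i j => hP j i) h) c)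

theorem continuous_uncurry_equilMap (P : Matrix (Fin n) (Fin n) ℝ) (w : Fin n → ℝ) :
    Continuous (uncurry (equilMap P w)) :=
  (continuous_sat w).comp ((continuous_const.matrix_mulVec continuous_snd).add continuous_fst)

end Network

theorem extremal_equilibria_one_sided_limits_general
    {n : ℕ} {P : Matrix (Fin n) (Fin n) ℝ} (hP : ∀ i j, 0 ≤ P i j) {w : Fin n → ℝ}
    {xlo xhi : (Fin n → ℝ) → (Fin n → ℝ)}
    (hlo : ∀ c, IsLeast {x | IsEquil P w c x} (xlo c))
    (hhi : ∀ c, IsGreatest {x | IsEquil P w c x} (xhi c)) (cstar : Fin n → ℝ) :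
    ContinuousWithinAt xlo (Iic cstar) cstar ∧ ContinuousWithinAt xhi (Ici cstar) cstar := by
  simp only [← fixedPoints_equilMap] at hlo hhi
  have hcont := continuous_uncurry_equilMap P w
  have hparam := monotone_equilMap P w
  have hmono := monotone_equilMap_apply hP w
  have hmem : ∀ c x, equilMap P w c x ∈ Icc (0 ⊓ w) w := fun _ _ => sat_mem_Icc w _
  exact ⟨continuousWithinAt_Iic_of_isLeast_fixedPoints hcont hparam hmono hmem hlo cstar,
    continuousWithinAt_Ici_of_isGreatest_fixedPoints hcont hparam hmono hmem hhi cstar⟩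

/-- one-sided continuity of the extremal equilibria along the all-ones
direction: `x̲(c* − t𝟙) → x̲(c*)` and `x̄(c* + t𝟙) → x̄(c*)` as `t → 0⁺`. -/
theorem extremal_equilibria_one_sided_limits
    {n : ℕ} (hn : 1 ≤ n) (P : Matrix (Fin n) (Fin n) ℝ)
    (hP : ∀ i j, 0 ≤ P i j) (hsub : ∀ i, ∑ j, P i j ≤ 1)
    (w : Fin n → ℝ) (hw : 0 ≤ w)
    (xlo xhi : (Fin n → ℝ) → (Fin n → ℝ))
    (hlo : ∀ c, IsEquil P w c (xlo c) ∧ ∀ y, IsEquil P w c y → xlo c ≤ y)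
    (hhi : ∀ c, IsEquil P w c (xhi c) ∧ ∀ y, IsEquil P w c y → y ≤ xhi c) :
    ∀ cstar : Fin n → ℝ,
      Tendsto (fun t : ℝ => xlo (fun i => cstar i - t)) (𝓝[>] 0) (𝓝 (xlo cstar)) ∧
      Tendsto (fun t : ℝ => xhi (fun i => cstar i + t)) (𝓝[>] 0) (𝓝 (xhi cstar)) := by
  intro cstar
  obtain ⟨hleft, hright⟩ := extremal_equilibria_one_sided_limits_general hP
    (fun c => ⟨(hlo c).1, (hlo c).2⟩) (fun c => ⟨(hhi c).1, (hhi c).2⟩) cstar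
  exact ⟨hleft.tendsto.comp (tendsto_sub_const_nhdsLE cstar),
    hright.tendsto.comp (tendsto_add_const_nhdsGE cstar)⟩
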